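/- arXiv:2602.07965 — 2 statements merged into one kernel-verified Lean document; each statement's English description precedes it below -/
import Mathlib

section
/- For every n ≥ 1 and every integer i ≥ 4, in ℤ[x₁,…,xₙ] one has m_{(2,2,2,2,1^{i−4})} = σ₄·σᵢ − (i−2)·σ₃·σ_{i+1} + ((i² − 3i)/2)·σ₂·σ_{i+2} − ((i³ − 3i² − 4i + 12)/6)·σ₁·σ_{i+3} + ((i⁴ − 2i³ − 13i² + 38i − 24)/24)·σ_{i+4}. (All displayed rational coefficients are integers for integer i.) -/
open MvPolynomial

/-- The monomial symmetric polynomial in `n` variables over `ℤ` associated with the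
multiset of (positive) parts `lam`: the sum of all distinct monomials whose multiset of
nonzero exponents equals `lam`. -/
noncomputable def mSym (n : ℕ) (lam : Multiset ℕ) : MvPolynomial (Fin n) ℤ :=
  ∑ f : Fin n → Fin (lam.sum + 1),
    if Multiset.map (fun i => (f i : ℕ)) (Finset.univ.filter fun i => (f i : ℕ) ≠ 0).val = lam
    then ∏ i, X i ^ (f i : ℕ) else 0

/-!
A pair of sets `(A, B)` with `|A| = p` and `|B| = p + e` contributes `x_{A ∩ B}² x_{A ∆ B}` to
`σ_p σ_{p+e}`, and `A` is determined by `A ∩ B`, `A ∆ B` and the choice of `A \ B` inside `A ∆ B`.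
Hence `σ_p σ_{p+e} = ∑_s (e+2s choose s) m_{(2^{p-s}, 1^{e+2s})}`. This triangular system is
inverted by the Vandermonde convolution with a negative upper index:
`m_{(2^p, 1^d)} = ∑_k (-1)^k c_k σ_{p-k} σ_{p+d+k}`, where `c_0 = 1` and
`c_{k+1} = (d+k+1 choose k+1) + (d+k choose k)`.
-/

section AlternatingConvolution

open Finset

/-- The absolute value of the coefficient of `σ_{p-k} σ_{p+d+k}` in the expansion of `m_{(2^p,1^d)}`
in products of two elementary symmetric polynomials; it equals
`(d + 2 * k) / (d + k) * (d + k).choose k` when `d + k ≠ 0`. -/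
def expansionCoeff (d : ℕ) : ℕ → ℕ
  | 0 => 1
  | k + 1 => (d + (k + 1)).choose (k + 1) + (d + k).choose k

lemma factorial_mul_expansionCoeff_succ (d k : ℕ) :
    (k + 1).factorial * expansionCoeff d (k + 1) =
      (d + 2 * (k + 1)) * (d + 1).ascFactorial k := by
  calc (k + 1).factorial * expansionCoeff d (k + 1)
      = (k + 1).factorial * (d + (k + 1)).choose (k + 1)
          + (k + 1) * (k.factorial * (d + k).choose k) := by
        rw [expansionCoeff, Nat.factorial_succ]; ring
    _ = (d + 1).ascFactorial (k + 1) + (k + 1) * (d + 1).ascFactorial k := by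
        simp only [Nat.ascFactorial_eq_factorial_mul_choose]
    _ = (d + 2 * (k + 1)) * (d + 1).ascFactorial k := by
        rw [Nat.ascFactorial_succ]; ring

lemma expansionCoeff_succ_eq_ediv (d k : ℕ) :
    (expansionCoeff d (k + 1) : ℤ) =
      (d + 2 * (k + 1)) * (d + 1).ascFactorial k / (k + 1).factorial := by
  refine (Int.ediv_eq_of_eq_mul_right (by positivity) ?_).symm
  exact_mod_cast (factorial_mul_expansionCoeff_succ d k).symm

lemma expansionCoeff_zero (d : ℕ) : expansionCoeff d 0 = 1 := rfl

lemma expansionCoeff_one (d : ℕ) : (expansionCoeff d 1 : ℤ) = (d + 4 : ℤ) - 2 := by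
  simp only [expansionCoeff, zero_add, Nat.choose_one_right, Nat.choose_zero_right]
  push_cast
  ring

lemma expansionCoeff_two (d : ℕ) :
    (expansionCoeff d 2 : ℤ) = ((d + 4 : ℤ) ^ 2 - 3 * (d + 4)) / 2 := by
  rw [expansionCoeff_succ_eq_ediv]
  simp only [Nat.ascFactorial, Nat.factorial]
  push_cast
  ring_nf

lemma expansionCoeff_three (d : ℕ) :
    (expansionCoeff d 3 : ℤ) =
      ((d + 4 : ℤ) ^ 3 - 3 * (d + 4) ^ 2 - 4 * (d + 4) + 12) / 6 := by
  rw [expansionCoeff_succ_eq_ediv]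
  simp only [Nat.ascFactorial, Nat.factorial]
  push_cast
  ring_nf

lemma expansionCoeff_four (d : ℕ) :
    (expansionCoeff d 4 : ℤ) =
      ((d + 4 : ℤ) ^ 4 - 2 * (d + 4) ^ 3 - 13 * (d + 4) ^ 2 + 38 * (d + 4) - 24) / 24 := by
  rw [expansionCoeff_succ_eq_ediv]
  simp only [Nat.ascFactorial, Nat.factorial]
  push_cast
  ring_nf

-- Vandermonde for `(1 + x)^(-(d + 1)) * (1 + x)^(d + 1 + m) = (1 + x)^m`.
lemma sum_antidiagonal_neg_one_pow_mul_choose_mul_choose (d m s : ℕ) :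
    ∑ kl ∈ antidiagonal s,
        (-1 : ℤ) ^ kl.1 * (d + kl.1).choose kl.1 * (d + 1 + m).choose kl.2 = m.choose s := by
  have choose_neg (k : ℕ) :
      Ring.choose (-(d + 1 : ℤ)) k = (-1) ^ k * (d + k).choose k := by
    rw [Ring.choose_neg, ← Ring.choose_natCast, Units.smul_def, Int.coe_negOnePow_natCast,
      smul_eq_mul]
    congr 2
    push_cast
    ring
  have vandermonde := Ring.add_choose_eq s
    (Commute.all (-(d + 1 : ℤ)) ((d + 1 + m : ℕ) : ℤ))
  rw [show -(d + 1 : ℤ) + ((d + 1 + m : ℕ) : ℤ) = m by push_cast; ring] at vandermonde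
  simpa only [choose_neg, Ring.choose_natCast] using vandermonde.symm

lemma sum_antidiagonal_neg_one_pow_mul_expansionCoeff_mul_choose (d s : ℕ) :
    ∑ kl ∈ antidiagonal s,
        (-1 : ℤ) ^ kl.1 * expansionCoeff d kl.1 * (d + 2 * s).choose kl.2 =
      if s = 0 then 1 else 0 := by
  obtain _ | s := s
  · simp [expansionCoeff]
  have first := sum_antidiagonal_neg_one_pow_mul_choose_mul_choose d (2 * s + 1) (s + 1)
  have second := sum_antidiagonal_neg_one_pow_mul_choose_mul_choose d (2 * s + 1) s
  rw [Nat.sum_antidiagonal_succ] at first ⊢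
  rw [show d + 1 + (2 * s + 1) = d + 2 * (s + 1) by ring] at first second
  calc _ = ((2 * s + 1).choose (s + 1) : ℤ) - (2 * s + 1).choose s := by
        rw [← first, ← second, add_sub_assoc, ← sum_sub_distrib]
        congr 1
        · simp [expansionCoeff]
        · refine sum_congr rfl fun kl _ => ?_
          simp only [expansionCoeff]
          push_cast
          ring
    _ = _ := by simp [Nat.choose_symm_half]

end AlternatingConvolution

section PairsOfSubsets

open Finset

variable {σ M : Type*} [Fintype σ] [DecidableEq σ] [AddCommMonoid M]

open scoped symmDiff

lemma sum_powersetCard_inter_symmDiff_sdiff (F : Finset σ → Finset σ → Finset σ → M) (p e : ℕ) :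
    ∑ A ∈ powersetCard p univ, ∑ B ∈ powersetCard (p + e) univ,
        F (A ∩ B) (A ∆ B) (A \ B) =
      ∑ sa ∈ antidiagonal p, ∑ S ∈ powersetCard sa.2 univ,
        ∑ T ∈ powersetCard (e + 2 * sa.1) Sᶜ, ∑ D ∈ powersetCard sa.1 T, F S T D := by
  simp only [sum_sigma']
  refine sum_bij'
    (fun AB _ => ⟨((AB.1 \ AB.2).card, (AB.1 ∩ AB.2).card), AB.1 ∩ AB.2, AB.1 ∆ AB.2,
      AB.1 \ AB.2⟩)
    (fun w _ => ⟨w.2.1 ∪ w.2.2.2, w.2.1 ∪ (w.2.2.1 \ w.2.2.2)⟩) ?_ ?_ ?_ ?_ (fun _ _ => rfl)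
  · rintro ⟨A, B⟩ hAB
    simp only [mem_sigma, mem_powersetCard, subset_univ, true_and] at hAB
    obtain ⟨hA, hB⟩ := hAB
    have card_A := card_sdiff_add_card_inter A B
    have card_B := card_sdiff_add_card_inter B A
    have card_AB : (A ∆ B).card = (A \ B).card + (B \ A).card :=
      card_union_of_disjoint disjoint_sdiff_sdiff
    rw [inter_comm] at card_B
    simp only [mem_sigma, HasAntidiagonal.mem_antidiagonal, mem_powersetCard, subset_univ, true_and,
      and_true]
    exact ⟨by lia, ⟨by grind [mem_symmDiff, mem_compl], by lia⟩, by grind [mem_symmDiff]⟩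
  · rintro ⟨⟨s, a⟩, S, T, D⟩ hw
    simp only [mem_sigma, HasAntidiagonal.mem_antidiagonal, mem_powersetCard, subset_univ, true_and,
      subset_compl_iff_disjoint_left] at hw ⊢
    obtain ⟨hsa, hS, ⟨hST, hT⟩, hDT, hD⟩ := hw
    rw [card_union_of_disjoint (hST.mono_right hDT),
      card_union_of_disjoint (hST.mono_right sdiff_subset), card_sdiff_of_subset hDT]
    lia
  · rintro ⟨A, B⟩ -
    simp only [Sigma.mk.injEq, heq_eq_eq]
    grind [mem_symmDiff]
  · rintro ⟨⟨s, a⟩, S, T, D⟩ hw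
    simp only [mem_sigma, HasAntidiagonal.mem_antidiagonal, mem_powersetCard, subset_univ, true_and,
      subset_compl_iff_disjoint_left] at hw
    obtain ⟨hsa, rfl, ⟨hST, hT⟩, hDT, rfl⟩ := hw
    have inter_eq : (S ∪ D) ∩ (S ∪ T \ D) = S := by grind
    have sdiff_eq : (S ∪ D) \ (S ∪ T \ D) = D := by grind [disjoint_left]
    have symmDiff_eq : (S ∪ D) ∆ (S ∪ T \ D) = T := by grind [mem_symmDiff, disjoint_left]
    simp only [inter_eq, sdiff_eq, symmDiff_eq]

lemma sum_powersetCard_inter_symmDiff (F : Finset σ → Finset σ → M) (p e : ℕ) :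
    ∑ A ∈ powersetCard p univ, ∑ B ∈ powersetCard (p + e) univ,
        F (A ∩ B) (A ∆ B) =
      ∑ sa ∈ antidiagonal p, (e + 2 * sa.1).choose sa.1 •
        ∑ S ∈ powersetCard sa.2 univ,
          ∑ T ∈ powersetCard (e + 2 * sa.1) Sᶜ, F S T := by
  rw [sum_powersetCard_inter_symmDiff_sdiff fun S T _ => F S T]
  simp only [smul_sum]
  refine sum_congr rfl fun sa _ => sum_congr rfl fun S _ => sum_congr rfl fun T hT => ?_
  rw [sum_const, card_powersetCard, (mem_powersetCard.1 hT).2]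

end PairsOfSubsets

section TwosOnes

open Finset

variable (σ R : Type*) [Fintype σ] [DecidableEq σ]

/-- The monomial symmetric polynomial `m_{(2^a,1^b)}`, as the sum of `x_S² x_T` over disjoint sets
`S` and `T` of `a` and `b` variables. -/
noncomputable def msymmTwosOnes [CommSemiring R] (a b : ℕ) : MvPolynomial σ R :=
  ∑ S ∈ powersetCard a univ, ∑ T ∈ powersetCard b Sᶜ,
    (∏ i ∈ S, X i ^ 2) * ∏ i ∈ T, X i

open scoped symmDiff in
lemma esymm_mul_esymm_add [CommSemiring R] (p e : ℕ) :
    esymm σ R p * esymm σ R (p + e) =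
      ∑ sa ∈ antidiagonal p,
        (e + 2 * sa.1).choose sa.1 • msymmTwosOnes σ R sa.2 (e + 2 * sa.1) := by
  have prod_mul_prod (A B : Finset σ) :
      (∏ i ∈ A, X i) * ∏ i ∈ B, X i =
        (∏ i ∈ A ∩ B, X i ^ 2) * ∏ i ∈ A ∆ B, (X i : MvPolynomial σ R) := by
    have union_eq : A ∪ B = (A ∩ B) ∪ A ∆ B := by grind [mem_symmDiff]
    have disjoint : Disjoint (A ∩ B) (A ∆ B) := (disjoint_symmDiff_inf A B).symm
    rw [← prod_union_inter, union_eq, prod_union disjoint, prod_pow]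
    ring
  simp only [esymm, sum_mul_sum, prod_mul_prod]
  exact sum_powersetCard_inter_symmDiff (fun S T => (∏ i ∈ S, X i ^ 2) * ∏ i ∈ T, X i) p e

theorem msymmTwosOnes_eq_sum_esymm_mul_esymm [CommRing R] (p d : ℕ) :
    msymmTwosOnes σ R p d =
      ∑ kj ∈ antidiagonal p, ((-1 : ℤ) ^ kj.1 * expansionCoeff d kj.1) •
        (esymm σ R kj.2 * esymm σ R (p + d + kj.1)) := by
  symm
  calc _ = ∑ kj ∈ antidiagonal p, ∑ sa ∈ antidiagonal kj.2,
        ((-1 : ℤ) ^ kj.1 * expansionCoeff d kj.1 * (d + 2 * (kj.1 + sa.1)).choose sa.1) •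
          msymmTwosOnes σ R sa.2 (d + 2 * (kj.1 + sa.1)) := by
        refine sum_congr rfl fun ⟨k, j⟩ hkj => ?_
        rw [HasAntidiagonal.mem_antidiagonal] at hkj
        dsimp only at hkj
        rw [show p + d + k = j + (d + 2 * k) by lia, esymm_mul_esymm_add, smul_sum]
        simp only [mul_add, mul_smul, natCast_zsmul, add_assoc]
    _ = ∑ ua ∈ antidiagonal p, (∑ ks ∈ antidiagonal ua.1,
        (-1 : ℤ) ^ ks.1 * expansionCoeff d ks.1 * (d + 2 * ua.1).choose ks.2) •
          msymmTwosOnes σ R ua.2 (d + 2 * ua.1) := by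
        simp only [sum_smul, sum_sigma']
        refine sum_nbij' (fun w => ⟨(w.1.1 + w.2.1, w.2.2), (w.1.1, w.2.1)⟩)
          (fun w => ⟨(w.2.1, w.2.2 + w.1.2), (w.2.2, w.1.2)⟩) ?_ ?_ ?_ ?_ ?_ <;>
        · rintro ⟨⟨k, j⟩, s, a⟩ h
          grind [HasAntidiagonal.mem_antidiagonal]
    _ = msymmTwosOnes σ R p d := by
        simp only [sum_antidiagonal_neg_one_pow_mul_expansionCoeff_mul_choose, ite_smul, one_smul,
          zero_smul]
        rw [sum_eq_single_of_mem (0, p) (by simp) (by grind [HasAntidiagonal.mem_antidiagonal])]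
        simp

end TwosOnes

section Exponents

open Finset

lemma map_filter_ne_zero_eq_replicate_add_replicate_iff {ι : Type*} [Fintype ι] (f : ι → ℕ)
    (a b : ℕ) :
    (univ.filter fun i => f i ≠ 0).val.map f =
        Multiset.replicate a 2 + Multiset.replicate b 1 ↔
      (univ.filter fun i => f i = 2).card = a ∧
        (univ.filter fun i => f i = 1).card = b ∧ ∀ i, f i ≤ 2 := by
  have count_map (v : ℕ) (hv : v ≠ 0) :
      ((univ.filter fun i => f i ≠ 0).val.map f).count v =
        (univ.filter fun i => f i = v).card := by
    rw [Multiset.count_map, ← filter_val, card_val, filter_filter]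
    congr 1
    grind
  constructor
  · intro h
    refine ⟨?_, ?_, fun i => ?_⟩
    · rw [← count_map 2 two_ne_zero, h]
      simp [Multiset.count_replicate]
    · rw [← count_map 1 one_ne_zero, h]
      simp [Multiset.count_replicate]
    · by_contra! hi
      have mem : f i ∈ Multiset.replicate a 2 + Multiset.replicate b 1 :=
        h ▸ Multiset.mem_map_of_mem f (by simp; lia)
      simp only [Multiset.mem_add, Multiset.mem_replicate] at mem
      lia
  · rintro ⟨rfl, rfl, hf⟩
    ext v
    rcases eq_or_ne v 0 with rfl | hv
    · simp [Multiset.count_replicate]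
    · rw [count_map v hv, Multiset.count_add, Multiset.count_replicate, Multiset.count_replicate]
      obtain rfl | rfl | hv' : v = 2 ∨ v = 1 ∨ 2 < v := by lia
      · simp
      · simp
      · rw [if_neg (by lia), if_neg (by lia), card_eq_zero, filter_eq_empty_iff]
        intro i _
        have := hf i
        lia

lemma exists_filter_eq_two_filter_eq_one {ι : Type*} [Fintype ι] {S T : Finset ι}
    (disjoint : Disjoint S T) {N : ℕ} (hN : 2 * S.card + T.card < N) :
    ∃ f : ι → Fin N, (univ.filter fun i => (f i : ℕ) = 2) = S ∧
      (univ.filter fun i => (f i : ℕ) = 1) = T ∧ ∀ i, (f i : ℕ) ≤ 2 := by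
  classical
  have lt (i : ι) : (if i ∈ S then 2 else if i ∈ T then 1 else 0) < N := by
    split_ifs with hS hT
    · have := card_pos.2 ⟨i, hS⟩
      lia
    · have := card_pos.2 ⟨i, hT⟩
      lia
    · lia
  exact ⟨fun i => ⟨_, lt i⟩, by grind, by grind [disjoint_left], by grind⟩

lemma mSym_replicate_two_add_replicate_one (n a b : ℕ) :
    mSym n (Multiset.replicate a 2 + Multiset.replicate b 1) = msymmTwosOnes (Fin n) ℤ a b := by
  simp only [mSym, ← sum_filter, map_filter_ne_zero_eq_replicate_add_replicate_iff,
    msymmTwosOnes, sum_sigma']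
  refine sum_nbij (fun f => ⟨univ.filter fun i => (f i : ℕ) = 2,
    univ.filter fun i => (f i : ℕ) = 1⟩) ?_ ?_ ?_ ?_
  · intro f hf
    obtain ⟨-, card_two, card_one, -⟩ := mem_filter.1 hf
    simp only [mem_sigma, mem_powersetCard, subset_univ, true_and]
    refine ⟨card_two, ?_, card_one⟩
    grind [mem_compl]
  · intro f hf g hg hfg
    obtain ⟨-, -, -, f_le⟩ := mem_filter.1 hf
    obtain ⟨-, -, -, g_le⟩ := mem_filter.1 hg
    simp only [Sigma.mk.injEq, heq_eq_eq, Finset.ext_iff, mem_filter_univ] at hfg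
    ext i
    grind
  · rintro ⟨S, T⟩ hST
    simp only [coe_sigma, Set.mem_sigma_iff, mem_coe, mem_powersetCard, subset_univ, true_and,
      subset_compl_iff_disjoint_left] at hST
    obtain ⟨rfl, disjoint, rfl⟩ := hST
    obtain ⟨f, two, one, f_le⟩ := exists_filter_eq_two_filter_eq_one disjoint
      (N := (Multiset.replicate S.card 2 + Multiset.replicate T.card 1).sum + 1) (by simp; lia)
    refine ⟨f, by simp [two, one, f_le], by simp only [two, one]⟩
  · intro f hf
    obtain ⟨-, -, -, f_le⟩ := mem_filter.1 hf
    rw [prod_filter, prod_filter, ← prod_mul_distrib]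
    refine prod_congr rfl fun i _ => ?_
    have := f_le i
    interval_cases (f i : ℕ) <;> simp

theorem stmt_15_general (n p d : ℕ) :
    mSym n (Multiset.replicate p 2 + Multiset.replicate d 1) =
      ∑ kj ∈ antidiagonal p, ((-1 : ℤ) ^ kj.1 * expansionCoeff d kj.1) •
        (esymm (Fin n) ℤ kj.2 * esymm (Fin n) ℤ (p + d + kj.1)) := by
  rw [mSym_replicate_two_add_replicate_one, msymmTwosOnes_eq_sum_esymm_mul_esymm]

end Exponents

theorem stmt_15 (n : ℕ) (hn : 1 ≤ n) (i : ℕ) (hi : 4 ≤ i) :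
    mSym n (2 ::ₘ 2 ::ₘ 2 ::ₘ 2 ::ₘ Multiset.replicate (i - 4) 1)
      = esymm (Fin n) ℤ 4 * esymm (Fin n) ℤ (i) - C (((i : ℤ) - 2 : ℤ)) * esymm (Fin n) ℤ 3 * esymm (Fin n) ℤ (i + 1)
        + C ((((i : ℤ)^2 - 3 * (i : ℤ)) / 2 : ℤ)) * esymm (Fin n) ℤ 2 * esymm (Fin n) ℤ (i + 2)
        - C ((((i : ℤ)^3 - 3 * (i : ℤ)^2 - 4 * (i : ℤ) + 12) / 6 : ℤ)) * esymm (Fin n) ℤ 1 * esymm (Fin n) ℤ (i + 3)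
        + C ((((i : ℤ)^4 - 2 * (i : ℤ)^3 - 13 * (i : ℤ)^2 + 38 * (i : ℤ) - 24) / 24 : ℤ)) * esymm (Fin n) ℤ (i + 4) := by
  obtain ⟨d, rfl⟩ := Nat.exists_eq_add_of_le' hi
  have parts_eq : 2 ::ₘ 2 ::ₘ 2 ::ₘ 2 ::ₘ Multiset.replicate (d + 4 - 4) 1 =
      Multiset.replicate 4 2 + Multiset.replicate d 1 := by
    simp [Multiset.replicate_succ]
  rw [parts_eq, stmt_15_general]
  simp only [Finset.Nat.sum_antidiagonal_succ, Finset.Nat.antidiagonal_zero, Finset.sum_singleton,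
    Nat.reduceAdd, expansionCoeff_zero, expansionCoeff_one, expansionCoeff_two,
    expansionCoeff_three, expansionCoeff_four, esymm_zero, smul_eq_C_mul, C_mul, C_pow, C_neg, C_1,
    Nat.cast_one, Nat.cast_add, Nat.cast_ofNat, add_comm 4 d]
  ring
end

section
/- For every n ≥ 1 and every integer i ≥ 1, in ℤ[x₁,…,xₙ] one has m_{(5,1^{i−1})} = σ₁⁴·σᵢ − 4·σ₁²·σ₂·σᵢ + 4·σ₁·σ₃·σᵢ + 2·σ₂²·σᵢ − 4·σ₄·σᵢ − σ₁³·σ_{i+1} + 3·σ₁·σ₂·σ_{i+1} − 3·σ₃·σ_{i+1} + σ₁²·σ_{i+2} − 2·σ₂·σ_{i+2} − σ₁·σ_{i+3} + (i+4)·σ_{i+4}. -/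
open MvPolynomial

/-!
Put `h a j = ∑ l, X l ^ a * e_j(X without X l)`, which is `m_(a, 1^j)` as soon as `2 ≤ a`.
Splitting `e_{j+1}` according to whether a monomial involves `X l` gives
`p_a e_{j+1} = h a (j+1) + h (a+1) j`, and `h 1 j = (j+1) e_{j+1}` because each square-free monomial
of degree `j+1` arises once for each of its variables. Unrolling the recurrence in `a` expresses
`h (a+1) j` by power sums and elementary symmetric polynomials; for `a = 4` Newton's identities then
eliminate the power sums.
-/

section HookSum

variable {σ R : Type*} [Fintype σ] [DecidableEq σ] [CommSemiring R]

lemma multiset_esymm_cons_succ (x : R) (s : Multiset R) (j : ℕ) :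
    (x ::ₘ s).esymm (j + 1) = s.esymm (j + 1) + x * s.esymm j := by
  simp only [Multiset.esymm, Multiset.powersetCard_cons, Multiset.map_add, Multiset.sum_add,
    Multiset.map_map, Function.comp_def, Multiset.prod_cons, Multiset.sum_map_mul_left]

variable (R) in
/-- The `j`-th elementary symmetric polynomial in all variables except `X l`. -/
noncomputable def esymmErase (l : σ) (j : ℕ) : MvPolynomial σ R :=
  ∑ t ∈ (Finset.univ.erase l).powersetCard j, ∏ k ∈ t, X k

lemma esymm_succ_eq_esymmErase_add (l : σ) (j : ℕ) :
    esymm σ R (j + 1) = esymmErase R l (j + 1) + X l * esymmErase R l j := by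
  have erase_esymm (m : ℕ) :
      esymmErase R l m = ((Finset.univ.erase l).val.map X).esymm m :=
    (Finset.esymm_map_val X _ m).symm
  rw [erase_esymm, erase_esymm, ← multiset_esymm_cons_succ, ← Multiset.map_cons,
    Finset.erase_val, Multiset.cons_erase (Finset.mem_univ_val l), esymm_eq_multiset_esymm]

variable (σ R) in
/-- The sum of the monomials `X l ^ a * ∏ k ∈ t, X k` over all `l` and all sets `t` of `j` variables
other than `l`. For `2 ≤ a` this is the monomial symmetric polynomial of the hook `(a, 1^j)`; for
`a = 1` every monomial is counted `j + 1` times. -/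
noncomputable def hookSum (a j : ℕ) : MvPolynomial σ R :=
  ∑ l, X l ^ a * esymmErase R l j

lemma psum_mul_esymm_succ (a j : ℕ) :
    psum σ R a * esymm σ R (j + 1) = hookSum σ R a (j + 1) + hookSum σ R (a + 1) j := by
  simp only [psum, hookSum, Finset.sum_mul, ← Finset.sum_add_distrib]
  refine Finset.sum_congr rfl fun l _ ↦ ?_
  rw [esymm_succ_eq_esymmErase_add l]
  ring

variable (σ) in
/-- The pairs `(l, t)` of a distinguished variable and a set of `j` other variables: they index the
monomials of `hookSum`. -/
def hookIndices (j : ℕ) : Finset (σ × Finset σ) :=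
  Finset.univ.filter fun p ↦ p.1 ∉ p.2 ∧ p.2.card = j

lemma mem_hookIndices {j : ℕ} {p : σ × Finset σ} :
    p ∈ hookIndices σ j ↔ p.1 ∉ p.2 ∧ p.2.card = j :=
  Finset.mem_filter_univ p

lemma hookSum_eq_sum_hookIndices (a j : ℕ) :
    hookSum σ R a j = ∑ p ∈ hookIndices σ j, X p.1 ^ a * ∏ k ∈ p.2, X k := by
  simp only [hookSum, esymmErase, Finset.mul_sum]
  refine (Finset.sum_finset_product' _ _ _ fun p ↦ ?_).symm
  simp [mem_hookIndices, Finset.mem_powersetCard, Finset.subset_erase]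

lemma hookSum_one (j : ℕ) : hookSum σ R 1 j = (j + 1) * esymm σ R (j + 1) := by
  calc hookSum σ R 1 j
      = ∑ p ∈ hookIndices σ j, X p.1 * ∏ k ∈ p.2, X k := by
        simp only [hookSum_eq_sum_hookIndices, pow_one]
    _ = ∑ s ∈ Finset.univ.powersetCard (j + 1), ∑ _l ∈ s, ∏ k ∈ s, X k := by
        rw [Finset.sum_sigma']
        refine Finset.sum_bij' (fun p _ ↦ ⟨insert p.1 p.2, p.1⟩) (fun q _ ↦ (q.2, q.1.erase q.2))
          ?_ ?_ ?_ ?_ ?_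
        all_goals simp +contextual [mem_hookIndices, Finset.mem_powersetCard]
    _ = (j + 1) * esymm σ R (j + 1) := by
        rw [esymm, Finset.mul_sum]
        refine Finset.sum_congr rfl fun s hs ↦ ?_
        simp [(Finset.mem_powersetCard.1 hs).2]

end HookSum

section PowerSums

variable (σ R : Type*) [Fintype σ] [CommRing R]

lemma hookSum_succ_eq_sum [DecidableEq σ] (a j : ℕ) :
    hookSum σ R (a + 1) j =
      ∑ r ∈ Finset.range a, (-1) ^ r * psum σ R (a - r) * esymm σ R (j + r + 1) +
        (-1) ^ a * (j + a + 1) * esymm σ R (j + a + 1) := by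
  induction a generalizing j with
  | zero => simp [hookSum_one]
  | succ a ih =>
    have recurrence : hookSum σ R (a + 2) j =
        psum σ R (a + 1) * esymm σ R (j + 1) - hookSum σ R (a + 1) (j + 1) :=
      eq_sub_of_add_eq' (psum_mul_esymm_succ (a + 1) j).symm
    have shifted_terms :
        ∑ r ∈ Finset.range a, (-1) ^ (r + 1) * psum σ R (a + 1 - (r + 1)) *
            esymm σ R (j + (r + 1) + 1) =
          -∑ r ∈ Finset.range a, (-1) ^ r * psum σ R (a - r) * esymm σ R (j + 1 + r + 1) := by
      rw [← Finset.sum_neg_distrib]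
      refine Finset.sum_congr rfl fun r _ ↦ ?_
      rw [Nat.add_sub_add_right, add_right_comm j 1 r, add_assoc j r 1]
      ring
    rw [recurrence, ih, Finset.sum_range_succ', shifted_terms, add_right_comm j 1 a,
      add_assoc j a 1]
    push_cast
    ring

lemma psum_two_eq_esymm : psum σ R 2 = esymm σ R 1 ^ 2 - 2 * esymm σ R 2 := by
  have indices :
      {p ∈ Finset.HasAntidiagonal.antidiagonal 2 | p.1 ∈ Set.Ioo 0 2} = {(1, 1)} := by
    decide
  rw [psum_eq_mul_esymm_sub_sum σ R 2 two_pos, indices, Finset.sum_singleton, psum_one, ← esymm_one]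
  push_cast
  ring

lemma psum_three_eq_esymm :
    psum σ R 3 = esymm σ R 1 ^ 3 - 3 * esymm σ R 1 * esymm σ R 2 + 3 * esymm σ R 3 := by
  have indices :
      {p ∈ Finset.HasAntidiagonal.antidiagonal 3 | p.1 ∈ Set.Ioo 0 3} = {(1, 2), (2, 1)} := by
    decide
  rw [psum_eq_mul_esymm_sub_sum σ R 3 three_pos, indices, Finset.sum_pair (by decide),
    psum_two_eq_esymm, psum_one, ← esymm_one]
  push_cast
  ring

lemma psum_four_eq_esymm :
    psum σ R 4 = esymm σ R 1 ^ 4 - 4 * esymm σ R 1 ^ 2 * esymm σ R 2 +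
      4 * esymm σ R 1 * esymm σ R 3 + 2 * esymm σ R 2 ^ 2 - 4 * esymm σ R 4 := by
  have indices :
      {p ∈ Finset.HasAntidiagonal.antidiagonal 4 | p.1 ∈ Set.Ioo 0 4}
        = {(1, 3), (2, 2), (3, 1)} := by
    decide
  rw [psum_eq_mul_esymm_sub_sum σ R 4 four_pos, indices, Finset.sum_insert (by decide),
    Finset.sum_pair (by decide), psum_three_eq_esymm, psum_two_eq_esymm, psum_one, ← esymm_one]
  push_cast
  ring

end PowerSums

section HookExponent

variable {σ : Type*} [DecidableEq σ]

/-- The exponent vector of the monomial `X l ^ a * ∏ k ∈ t, X k`, where `l ∉ t`. -/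
def hookExponent (a : ℕ) (l : σ) (t : Finset σ) (k : σ) : ℕ :=
  if k = l then a else if k ∈ t then 1 else 0

lemma hookExponent_inj {a : ℕ} (ha : 2 ≤ a) {l l' : σ} {t t' : Finset σ}
    (hl : l ∉ t) (hl' : l' ∉ t') (h : hookExponent a l t = hookExponent a l' t') :
    l = l' ∧ t = t' := by
  have l_eq : l = l' := by
    by_contra hne
    have exponent_at_l := congrFun h l
    simp only [hookExponent, if_pos, if_neg hne] at exponent_at_l
    split_ifs at exponent_at_l <;> omega
  subst l_eq
  refine ⟨rfl, Finset.ext fun k ↦ ?_⟩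
  have exponent_at_k := congrFun h k
  by_cases hk : k = l
  · simp [hk, hl, hl']
  · simp only [hookExponent, if_neg hk] at exponent_at_k
    split_ifs at exponent_at_k <;> simp_all

end HookExponent

section Exponents

variable {σ : Type*} [Fintype σ]

/-- The partition formed by the nonzero exponents of the monomial with exponent vector `d`. -/
def exponentPartition (d : σ → ℕ) : Multiset ℕ :=
  Multiset.map d (Finset.univ.filter fun k ↦ d k ≠ 0).val

lemma le_sum_exponentPartition (d : σ → ℕ) (k : σ) : d k ≤ (exponentPartition d).sum := by
  by_cases hk : d k = 0
  · simp [hk]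
  · exact Multiset.le_sum_of_mem (Multiset.mem_map_of_mem d (by simpa using hk))

lemma mSym_eq_sum {n : ℕ} {lam : Multiset ℕ} (S : Finset (Fin n → ℕ))
    (mem_S : ∀ d, d ∈ S ↔ exponentPartition d = lam) :
    mSym n lam = ∑ d ∈ S, ∏ k, X k ^ d k := by
  rw [mSym, ← Finset.sum_filter]
  refine Finset.sum_bij (fun f _ k ↦ (f k : ℕ)) (fun f hf ↦ ?_) (fun f _ g _ hfg ↦ ?_)
    (fun d hd ↦ ?_) (fun f _ ↦ rfl)
  · exact (mem_S _).2 (Finset.mem_filter.1 hf).2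
  · exact funext fun k ↦ Fin.ext (congrFun hfg k)
  · have hd' := (mem_S d).1 hd
    have bound (k : Fin n) : d k < lam.sum + 1 :=
      Nat.lt_succ_of_le (hd' ▸ le_sum_exponentPartition d k)
    exact ⟨fun k ↦ ⟨d k, bound k⟩, Finset.mem_filter.2 ⟨Finset.mem_univ _, hd'⟩, rfl⟩

variable [DecidableEq σ]

lemma exponentPartition_hookExponent {a : ℕ} (ha : a ≠ 0) {l : σ} {t : Finset σ} (hl : l ∉ t) :
    exponentPartition (hookExponent a l t) = a ::ₘ Multiset.replicate t.card 1 := by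
  have support_eq :
      (Finset.univ.filter fun k ↦ hookExponent a l t k ≠ 0) = Finset.cons l t hl := by
    ext k
    rw [Finset.mem_filter_univ, Finset.mem_cons, hookExponent]
    by_cases hk : k = l <;> simp [hk, ha]
  have eq_one_on : ∀ k ∈ t.val, hookExponent a l t k = 1 := fun k hk ↦ by
    have hk' : k ∈ t := hk
    simp [hookExponent, ne_of_mem_of_not_mem hk' hl, hk']
  rw [exponentPartition, support_eq, Finset.cons_val, Multiset.map_cons,
    Multiset.map_congr rfl eq_one_on, Multiset.map_const', Finset.card_val, hookExponent,
    if_pos rfl]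

lemma exists_hookExponent_eq {a j : ℕ} {d : σ → ℕ}
    (hd : exponentPartition d = a ::ₘ Multiset.replicate j 1) :
    ∃ l t, l ∉ t ∧ t.card = j ∧ hookExponent a l t = d := by
  rw [exponentPartition] at hd
  set support := Finset.univ.filter fun k ↦ d k ≠ 0
  have mem_support (k : σ) : k ∈ support ↔ d k ≠ 0 := Finset.mem_filter_univ k
  obtain ⟨l, hl, rfl⟩ : ∃ l ∈ support.val, d l = a :=
    Multiset.mem_map.1 (by rw [hd]; exact Multiset.mem_cons_self a _)
  rw [← Multiset.cons_erase hl, Multiset.map_cons, Multiset.cons_inj_right,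
    ← Finset.erase_val, Multiset.eq_replicate, Multiset.card_map, Finset.card_val] at hd
  obtain ⟨card_eq, eq_one⟩ := hd
  refine ⟨l, support.erase l, Finset.notMem_erase _ _, card_eq, funext fun k ↦ ?_⟩
  rw [hookExponent]
  split_ifs with hkl hk
  · rw [hkl]
  · exact (eq_one _ (Multiset.mem_map_of_mem d hk)).symm
  · by_contra hk0
    exact hk (Finset.mem_erase.2 ⟨hkl, (mem_support k).2 (Ne.symm hk0)⟩)

lemma prod_X_pow_hookExponent {R : Type*} [CommSemiring R] (a : ℕ) {l : σ} {t : Finset σ}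
    (hl : l ∉ t) :
    ∏ k, (X k : MvPolynomial σ R) ^ hookExponent a l t k = X l ^ a * ∏ k ∈ t, X k := by
  have factor (k : σ) : (X k : MvPolynomial σ R) ^ hookExponent a l t k =
      (if k = l then X k ^ a else 1) * if k ∈ t then X k else 1 := by
    by_cases hk : k = l
    · simp [hookExponent, hk, hl]
    · simp [hookExponent, hk, pow_ite]
  simp_rw [factor, Finset.prod_mul_distrib]
  simp

lemma mem_image_hookExponent {a : ℕ} (ha : a ≠ 0) (j : ℕ) (d : σ → ℕ) :
    d ∈ (hookIndices σ j).image (fun p ↦ hookExponent a p.1 p.2) ↔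
      exponentPartition d = a ::ₘ Multiset.replicate j 1 := by
  simp only [Finset.mem_image, Prod.exists, mem_hookIndices]
  constructor
  · rintro ⟨l, t, ⟨hl, rfl⟩, rfl⟩
    exact exponentPartition_hookExponent ha hl
  · intro hd
    obtain ⟨l, t, hl, ht, rfl⟩ := exists_hookExponent_eq hd
    exact ⟨l, t, ⟨hl, ht⟩, rfl⟩

lemma hookExponent_injOn {a : ℕ} (ha : 2 ≤ a) (j : ℕ) :
    Set.InjOn (fun p : σ × Finset σ ↦ hookExponent a p.1 p.2) (hookIndices σ j) :=
  fun _ hp _ hq h ↦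
    Prod.ext_iff.2 <| hookExponent_inj ha (mem_hookIndices.1 hp).1 (mem_hookIndices.1 hq).1 h

theorem mSym_hook_eq_hookSum (n : ℕ) {a : ℕ} (ha : 2 ≤ a) (j : ℕ) :
    mSym n (a ::ₘ Multiset.replicate j 1) = hookSum (Fin n) ℤ a j := by
  rw [mSym_eq_sum _ (mem_image_hookExponent (by omega) j),
    Finset.sum_image (hookExponent_injOn ha j), hookSum_eq_sum_hookIndices]
  exact Finset.sum_congr rfl fun p hp ↦ prod_X_pow_hookExponent a (mem_hookIndices.1 hp).1

end Exponents

theorem stmt_19 (n : ℕ) (hn : 1 ≤ n) (i : ℕ) (hi : 1 ≤ i) :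
    mSym n (5 ::ₘ Multiset.replicate (i - 1) 1)
      = esymm (Fin n) ℤ 1^4 * esymm (Fin n) ℤ (i) - C ((4 : ℤ)) * esymm (Fin n) ℤ 1^2 * esymm (Fin n) ℤ 2 * esymm (Fin n) ℤ (i)
        + C ((4 : ℤ)) * esymm (Fin n) ℤ 1 * esymm (Fin n) ℤ 3 * esymm (Fin n) ℤ (i) + C ((2 : ℤ)) * esymm (Fin n) ℤ 2^2 * esymm (Fin n) ℤ (i)
        - C ((4 : ℤ)) * esymm (Fin n) ℤ 4 * esymm (Fin n) ℤ (i)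
        - esymm (Fin n) ℤ 1^3 * esymm (Fin n) ℤ (i + 1) + C ((3 : ℤ)) * esymm (Fin n) ℤ 1 * esymm (Fin n) ℤ 2 * esymm (Fin n) ℤ (i + 1)
        - C ((3 : ℤ)) * esymm (Fin n) ℤ 3 * esymm (Fin n) ℤ (i + 1)
        + esymm (Fin n) ℤ 1^2 * esymm (Fin n) ℤ (i + 2) - C ((2 : ℤ)) * esymm (Fin n) ℤ 2 * esymm (Fin n) ℤ (i + 2)
        - esymm (Fin n) ℤ 1 * esymm (Fin n) ℤ (i + 3)
        + C (((i : ℤ) + 4 : ℤ)) * esymm (Fin n) ℤ (i + 4) := by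
  obtain ⟨j, rfl⟩ := Nat.exists_eq_add_of_le' hi
  rw [Nat.add_sub_cancel, mSym_hook_eq_hookSum n (by norm_num), hookSum_succ_eq_sum]
  simp only [Finset.sum_range_succ, Finset.sum_range_zero, Nat.reduceSub, psum_four_eq_esymm,
    psum_three_eq_esymm, psum_two_eq_esymm, psum_one, ← esymm_one, map_add, map_natCast, map_ofNat]
  push_cast
  ring
end
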